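/- For every positive integer m and every x ∈ [0, π], one has sin(x) + sin(mx)/m ≥ 0. -/

import Mathlib

open Real

theorem abs_sin_add_le (x y : ℝ) : |sin (x + y)| ≤ |sin x| + |sin y| :=
  calc |sin (x + y)| = |sin x * cos y + cos x * sin y| := by rw [sin_add]
    _ ≤ |sin x| * |cos y| + |cos x| * |sin y| := by
      simpa only [abs_mul] using abs_add_le (sin x * cos y) (cos x * sin y)
    _ ≤ |sin x| + |sin y| :=
      add_le_add (mul_le_of_le_one_right (abs_nonneg _) (abs_cos_le_one y))
        (mul_le_of_le_one_left (abs_nonneg _) (abs_cos_le_one x))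

theorem abs_sin_nat_mul_le (n : ℕ) (x : ℝ) : |sin (n * x)| ≤ n * |sin x| := by
  induction n with
  | zero => simp
  | succ n ih =>
    calc |sin ((n + 1 : ℕ) * x)| = |sin (n * x + x)| := by rw [Nat.cast_succ, add_one_mul]
      _ ≤ |sin (n * x)| + |sin x| := abs_sin_add_le _ _
      _ ≤ n * |sin x| + |sin x| := by gcongr
      _ = (n + 1 : ℕ) * |sin x| := by rw [Nat.cast_succ, add_one_mul]

theorem sin_plus_sin_m (m : ℕ) (hm : 1 ≤ m)
    (x : ℝ) (hx : x ∈ Set.Icc 0 Real.pi) :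
    0 ≤ Real.sin x + Real.sin (m * x) / m := by
  have hm_pos : (0 : ℝ) < m := Nat.cast_pos.mpr hm
  have sin_x_nonneg : 0 ≤ sin x := sin_nonneg_of_mem_Icc hx
  have abs_le : |sin (m * x) / m| ≤ sin x := by
    rw [abs_div, Nat.abs_cast, div_le_iff₀' hm_pos]
    simpa only [abs_of_nonneg sin_x_nonneg] using abs_sin_nat_mul_le m x
  exact neg_le_iff_add_nonneg'.mp (neg_le_of_abs_le abs_le)
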